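/- (Berndt–Chan √3 ratio.) One has ₂F₁(1/3, 2/3; 1; (3√3/4)·(√3 − 1)) = √3 · ₂F₁(1/3, 2/3; 1; (3√3 − 5)/4). (Both arguments lie in (0,1), so both hypergeometric series converge absolutely.) -/

import Mathlib

open Real

/-- Gauss hypergeometric function ₂F₁ defined via its power series
    (the tsum; converges absolutely for |z| < 1). -/
noncomputable def hyp2F1 (a b c z : ℝ) : ℝ :=
  ∑' n : ℕ, ((ascPochhammer ℝ n).eval a * (ascPochhammer ℝ n).eval b /
      (ascPochhammer ℝ n).eval c) * z ^ n / (Nat.factorial n)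

/-! Write `F` for `₂F₁(1/3, 2/3; 1; ·)`. For `0 ≤ x < 1` one has the cubic transformation
`F (1 - ((1 - x) / (1 + 2x))³) = (1 + 2x) F (x³)`: by Gauss's equation, both sides solve the same
self-adjoint equation `(p u')' = q u`, they agree at the singular point `0`, and `p` vanishes there,
so that their Wronskian is zero. The involution `x ↦ (1 - x) / (1 + 2x)` has the fixed point
`(√3 - 1) / 2`, where the transformation reads `F (1 - x³) = √3 F (x³)`. -/

open Set FormalMultilinearSeries

section PowerSeries

variable {𝕜 : Type*} [NontriviallyNormedField 𝕜]

lemma hasFPowerSeriesOnBall_deriv_ofScalars [CompleteSpace 𝕜] {f : 𝕜 → 𝕜} {A : ℕ → 𝕜} {x : 𝕜}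
    {r : ENNReal} (hf : HasFPowerSeriesOnBall f (ofScalars 𝕜 A) x r) :
    HasFPowerSeriesOnBall (deriv f) (ofScalars 𝕜 fun n ↦ (n + 1) * A (n + 1)) x r := by
  convert! (ContinuousLinearMap.apply 𝕜 𝕜 (1 : 𝕜)).comp_hasFPowerSeriesOnBall hf.fderiv
  ext n
  simp

lemma hasSum_of_hasFPowerSeriesOnBall_ofScalars {f : 𝕜 → 𝕜} {A : ℕ → 𝕜} {r : ENNReal}
    (hf : HasFPowerSeriesOnBall f (ofScalars 𝕜 A) 0 r) {z : 𝕜} (hz : ‖z‖ₑ < r) :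
    HasSum (fun n ↦ A n * z ^ n) (f z) := by
  simpa [mul_comm] using hf.hasSum (y := z) (by simpa using hz)

lemma hasSum_mul_pow_of_succ {A : ℕ → 𝕜} {z s : 𝕜} (hA : A 0 = 0)
    (h : HasSum (fun n ↦ A (n + 1) * z ^ n) s) : HasSum (fun n ↦ A n * z ^ n) (z * s) := by
  rw [← hasSum_nat_add_iff' 1]
  simpa [hA, pow_succ', mul_left_comm] using h.mul_left z

end PowerSeries

section Gauss

variable {𝕂 : Type*} [RCLike 𝕂] {a b c z : 𝕂}

lemma one_le_radius_ordinaryHypergeometricSeries (a b c : 𝕂) :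
    1 ≤ (ordinaryHypergeometricSeries 𝕂 a b c).radius := by
  by_cases! habc : ∀ k : ℕ, (k : 𝕂) ≠ -a ∧ (k : 𝕂) ≠ -b ∧ (k : 𝕂) ≠ -c
  · rw [ordinaryHypergeometricSeries_radius_eq_one 𝕂 a b c habc]
  · obtain ⟨k, hk⟩ := habc
    suffices h : (ordinaryHypergeometricSeries 𝕂 a b c).radius = ⊤ by simp [h]
    refine radius_eq_top_of_forall_image_add_eq_zero _ (k + 1) fun n ↦ ?_
    exact ordinaryHypergeometricSeries_eq_zero_of_neg_nat a b c (by tauto) (by lia)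

lemma hasFPowerSeriesOnBall_ordinaryHypergeometric (a b c : 𝕂) :
    HasFPowerSeriesOnBall (₂F₁ a b c : 𝕂 → 𝕂)
      (ofScalars 𝕂 (ordinaryHypergeometricCoefficient a b c)) 0 1 :=
  have hr := one_le_radius_ordinaryHypergeometricSeries a b c
  ((ordinaryHypergeometricSeries 𝕂 a b c).hasFPowerSeriesOnBall (one_pos.trans_le hr)).mono
    one_pos hr

lemma analyticAt_ordinaryHypergeometric (a b c : 𝕂) (hz : ‖z‖ < 1) :
    AnalyticAt 𝕂 (₂F₁ a b c) z :=
  (hasFPowerSeriesOnBall_ordinaryHypergeometric a b c).analyticAt_of_mem (by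
    simpa [← ofReal_norm] using hz)

lemma ordinaryHypergeometricCoefficient_succ (a b : 𝕂) {n : ℕ} (hc : c + n ≠ 0) :
    (n + 1) * (c + n) * ordinaryHypergeometricCoefficient a b c (n + 1) =
      (a + n) * (b + n) * ordinaryHypergeometricCoefficient a b c n := by
  have hn : (n : 𝕂) + 1 ≠ 0 := n.cast_add_one_ne_zero
  simp only [ordinaryHypergeometricCoefficient, ascPochhammer_succ_eval, Nat.factorial_succ]
  push_cast
  field_simp

theorem ordinaryHypergeometric_gauss (a b : 𝕂) (hc : ∀ n : ℕ, c + n ≠ 0) (hz : ‖z‖ < 1) :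
    z * (1 - z) * deriv (deriv (₂F₁ a b c)) z
      + (c - (a + b + 1) * z) * deriv (₂F₁ a b c) z = a * b * ₂F₁ a b c z := by
  have hz' : ‖z‖ₑ < 1 := by simpa [← ofReal_norm] using hz
  set A := ordinaryHypergeometricCoefficient a b c
  have hF := hasFPowerSeriesOnBall_ordinaryHypergeometric a b c
  have hF' := hasFPowerSeriesOnBall_deriv_ofScalars hF
  have sF := hasSum_of_hasFPowerSeriesOnBall_ofScalars hF hz'
  have sF' := hasSum_of_hasFPowerSeriesOnBall_ofScalars hF' hz'
  have sF'' := hasSum_of_hasFPowerSeriesOnBall_ofScalars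
    (hasFPowerSeriesOnBall_deriv_ofScalars hF') hz'
  have szF' : HasSum (fun n : ℕ ↦ n * A n * z ^ n) (z * deriv (₂F₁ a b c) z) :=
    hasSum_mul_pow_of_succ (by simp) (by simpa using sF')
  have szF'' : HasSum (fun n : ℕ ↦ n * ((n + 1) * A (n + 1)) * z ^ n)
      (z * deriv (deriv (₂F₁ a b c)) z) :=
    hasSum_mul_pow_of_succ (by simp) (by simpa using sF'')
  have szzF'' : HasSum (fun n : ℕ ↦ (n - 1) * (n * A n) * z ^ n)
      (z * (z * deriv (deriv (₂F₁ a b c)) z)) :=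
    hasSum_mul_pow_of_succ (by simp) (by simpa using szF'')
  have hsum := ((szF''.sub szzF'').add (sF'.mul_left c)).sub
    ((szF'.mul_left (a + b + 1)).add (sF.mul_left (a * b)))
  have hzero := hsum.unique <| hasSum_zero.congr_fun fun n ↦ by
    linear_combination z ^ n * ordinaryHypergeometricCoefficient_succ a b (hc n)
  linear_combination hzero

/-- The flux of the hypergeometric function with `c = 1`: for `a + b = 1`, Gauss's equation takes
the self-adjoint form `(z (1 - z) F')' = a b F`. -/
noncomputable def hypergeometricFlux (a b z : 𝕂) : 𝕂 :=
  z * (1 - z) * deriv (₂F₁ a b 1) z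

lemma hasDerivAt_hypergeometricFlux (hab : a + b = 1) (hz : ‖z‖ < 1) :
    HasDerivAt (hypergeometricFlux a b) (a * b * ₂F₁ a b 1 z) z := by
  have hone (n : ℕ) : (1 : 𝕂) + n ≠ 0 := add_comm (n : 𝕂) 1 ▸ n.cast_add_one_ne_zero
  have hF' := (analyticAt_ordinaryHypergeometric a b 1 hz).deriv.differentiableAt.hasDerivAt
  have hp : HasDerivAt (fun z : 𝕂 ↦ z * (1 - z)) (1 - 2 * z) z :=
    ((hasDerivAt_id z).mul ((hasDerivAt_id z).const_sub 1)).congr_deriv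
      (by simp only [id_eq, one_mul, mul_neg, mul_one]; ring)
  refine (hp.mul hF').congr_deriv ?_
  rw [← ordinaryHypergeometric_gauss a b hone hz, hab]
  ring

end Gauss

lemma ordinaryHypergeometric_pos {a b c z : ℝ} (ha : 0 < a) (hb : 0 < b) (hc : 0 < c)
    (hz : z ∈ Ico 0 1) : 0 < ₂F₁ a b c z := by
  have hz' : ‖z‖ₑ < 1 := by simpa [← ofReal_norm, abs_of_nonneg hz.1] using hz.2
  have hsum := hasSum_of_hasFPowerSeriesOnBall_ofScalars
    (hasFPowerSeriesOnBall_ordinaryHypergeometric a b c) hz'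
  have hnonneg (n : ℕ) : 0 ≤ ordinaryHypergeometricCoefficient a b c n * z ^ n := by
    have := ascPochhammer_pos n a ha
    have := ascPochhammer_pos n b hb
    have := ascPochhammer_pos n c hc
    have := hz.1
    positivity
  have hone_le : 1 ≤ ₂F₁ a b c z := by
    simpa [ordinaryHypergeometricCoefficient] using le_hasSum hsum 0 fun n _ ↦ hnonneg n
  exact one_pos.trans_le hone_le

lemma hyp2F1_eq_ordinaryHypergeometric (a b c z : ℝ) : hyp2F1 a b c z = ₂F₁ a b c z := by
  rw [ordinaryHypergeometric_eq_tsum]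
  refine tsum_congr fun n ↦ ?_
  rw [smul_eq_mul]
  ring

lemma eq_left_of_hasDerivAt_zero {f : ℝ → ℝ} {l r x : ℝ} (hf : ContinuousOn f (Ico l r))
    (hf' : ∀ y ∈ Ioo l r, HasDerivAt f 0 y) (hx : x ∈ Ico l r) : f x = f l := by
  rcases hx.1.eq_or_lt with rfl | hlx
  · rfl
  obtain ⟨_, _, hslope⟩ := exists_hasDerivAt_eq_slope f 0 hlx
    (hf.mono (Icc_subset_Ico_right hx.2)) fun y hy ↦ hf' y ⟨hy.1, hy.2.trans hx.2⟩
  simpa [sub_eq_zero, (sub_pos.2 hlx).ne'] using hslope.symm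

/-- `u` solves the self-adjoint equation `(u' / s)' = q u` on `(l, r)` with flux `U = u' / s`, and
both extend continuously to `l`. The equation is encoded as a first-order system, so that `s` may
blow up at `l`. -/
structure IsSelfAdjointSolution (s q u U : ℝ → ℝ) (l r : ℝ) : Prop where
  continuousOn : ContinuousOn u (Ico l r)
  continuousOn_flux : ContinuousOn U (Ico l r)
  hasDerivAt : ∀ x ∈ Ioo l r, HasDerivAt u (s x * U x) x
  hasDerivAt_flux : ∀ x ∈ Ioo l r, HasDerivAt U (q x * u x) x

namespace IsSelfAdjointSolution

variable {s q u U v V : ℝ → ℝ} {l r : ℝ}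

lemma congr {s' q' : ℝ → ℝ} (h : IsSelfAdjointSolution s q u U l r) (hs : EqOn s s' (Ioo l r))
    (hq : EqOn q q' (Ioo l r)) : IsSelfAdjointSolution s' q' u U l r where
  continuousOn := h.continuousOn
  continuousOn_flux := h.continuousOn_flux
  hasDerivAt x hx := hs hx ▸ h.hasDerivAt x hx
  hasDerivAt_flux x hx := hq hx ▸ h.hasDerivAt_flux x hx

lemma wronskian_eq_zero (hu : IsSelfAdjointSolution s q u U l r)
    (hv : IsSelfAdjointSolution s q v V l r) (hU : U l = 0) (hV : V l = 0) {x : ℝ}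
    (hx : x ∈ Ico l r) : u x * V x - v x * U x = 0 := by
  have hcont : ContinuousOn (u * V - v * U) (Ico l r) :=
    (hu.continuousOn.mul hv.continuousOn_flux).sub (hv.continuousOn.mul hu.continuousOn_flux)
  have hderiv : ∀ y ∈ Ioo l r, HasDerivAt (u * V - v * U) 0 y := fun y hy ↦
    (((hu.hasDerivAt y hy).mul (hv.hasDerivAt_flux y hy)).sub
      ((hv.hasDerivAt y hy).mul (hu.hasDerivAt_flux y hy))).congr_deriv (by ring)
  simpa [hU, hV] using eq_left_of_hasDerivAt_zero hcont hderiv hx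

theorem eqOn (hu : IsSelfAdjointSolution s q u U l r) (hv : IsSelfAdjointSolution s q v V l r)
    (hU : U l = 0) (hV : V l = 0) (huv : u l = v l) (hv0 : ∀ x ∈ Ico l r, v x ≠ 0) :
    EqOn u v (Ico l r) := by
  intro x hx
  have hderiv : ∀ y ∈ Ioo l r, HasDerivAt (u / v) 0 y := fun y hy ↦ by
    have hy' := Ioo_subset_Ico_self hy
    refine ((hu.hasDerivAt y hy).div (hv.hasDerivAt y hy) (hv0 y hy')).congr_deriv ?_
    rw [div_eq_zero_iff]
    left
    linear_combination -s y * hu.wronskian_eq_zero hv hU hV hy'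
  have hratio : u x / v x = u l / v l :=
    eq_left_of_hasDerivAt_zero (hu.continuousOn.div hv.continuousOn hv0) hderiv hx
  rwa [huv, div_self (hv0 l ⟨le_rfl, hx.1.trans_lt hx.2⟩), div_eq_one_iff_eq (hv0 x hx)] at hratio

end IsSelfAdjointSolution

lemma isSelfAdjointSolution_hypergeometric_comp {a b l r : ℝ} {φ φ' : ℝ → ℝ}
    (hab : a + b = 1) (hφ : ∀ x ∈ Ico l r, HasDerivAt φ (φ' x) x)
    (hφ_lt : ∀ x ∈ Ico l r, |φ x| < 1) (hφ_ne : ∀ x ∈ Ioo l r, φ x ≠ 0) :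
    IsSelfAdjointSolution (fun x ↦ φ' x / (φ x * (1 - φ x))) (fun x ↦ a * b * φ' x)
      (fun x ↦ ₂F₁ a b 1 (φ x)) (fun x ↦ hypergeometricFlux a b (φ x)) l r := by
  have hF : ∀ x ∈ Ico l r,
      HasDerivAt (fun x ↦ ₂F₁ a b 1 (φ x)) (deriv (₂F₁ a b 1) (φ x) * φ' x) x := fun x hx ↦
    (analyticAt_ordinaryHypergeometric a b 1 (hφ_lt x hx)).differentiableAt.hasDerivAt.comp x
      (hφ x hx)
  have hK : ∀ x ∈ Ico l r, HasDerivAt (fun x ↦ hypergeometricFlux a b (φ x))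
      (a * b * ₂F₁ a b 1 (φ x) * φ' x) x := fun x hx ↦
    (hasDerivAt_hypergeometricFlux hab (hφ_lt x hx)).comp x (hφ x hx)
  refine ⟨fun x hx ↦ (hF x hx).continuousAt.continuousWithinAt,
    fun x hx ↦ (hK x hx).continuousAt.continuousWithinAt, fun x hx ↦ ?_, fun x hx ↦ ?_⟩
  · refine (hF x (Ioo_subset_Ico_self hx)).congr_deriv ?_
    have hφ0 := hφ_ne x hx
    have hφ1 : 1 - φ x ≠ 0 :=
      (sub_pos.2 (lt_of_abs_lt (hφ_lt x (Ioo_subset_Ico_self hx)))).ne'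
    rw [hypergeometricFlux]
    field_simp
  · exact (hK x (Ioo_subset_Ico_self hx)).congr_deriv (by ring)

section CubicTransformation

/-- The argument on the left of the cubic transformation. -/
noncomputable def cubicArg (x : ℝ) : ℝ := 1 - ((1 - x) / (1 + 2 * x)) ^ 3

lemma hasDerivAt_one_add_two_mul (x : ℝ) : HasDerivAt (fun x : ℝ ↦ 1 + 2 * x) 2 x := by
  simpa using ((hasDerivAt_id x).const_mul 2).const_add 1

lemma hasDerivAt_cubicArg {x : ℝ} (hx : 1 + 2 * x ≠ 0) :
    HasDerivAt cubicArg (9 * (1 - x) ^ 2 / (1 + 2 * x) ^ 4) x := by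
  have hnum : HasDerivAt (fun x : ℝ ↦ 1 - x) (-1) x := (hasDerivAt_id x).const_sub 1
  refine (((hnum.div (hasDerivAt_one_add_two_mul x) hx).pow 3).const_sub 1).congr_deriv ?_
  simp only [Pi.div_apply, Nat.add_one_sub_one]
  field_simp
  ring

lemma cubicArg_mem_Ico {x : ℝ} (hx : x ∈ Ico 0 1) : cubicArg x ∈ Ico 0 1 := by
  obtain ⟨h0, h1⟩ := hx
  have hpos : 0 < (1 - x) / (1 + 2 * x) := div_pos (by linarith) (by linarith)
  have hle : (1 - x) / (1 + 2 * x) ≤ 1 := (div_le_one (by linarith)).2 (by linarith)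
  exact ⟨sub_nonneg.2 (pow_le_one₀ hpos.le hle), sub_lt_self 1 (pow_pos hpos 3)⟩

lemma cubicArg_eq {x : ℝ} (hx : 1 + 2 * x ≠ 0) :
    cubicArg x = 9 * x * (1 + x + x ^ 2) / (1 + 2 * x) ^ 3 := by
  -- the form in which `field_simp` normalizes the denominator
  have hx' : 1 + x * 2 ≠ 0 := by rwa [mul_comm x]
  rw [cubicArg]
  field_simp
  ring

/-- The weight `1 / p` of the equation `(p u')' = q u` satisfied by both sides of the cubic
transformation. -/
noncomputable def cubicWeight (x : ℝ) : ℝ := (1 + 2 * x) ^ 2 / (x * (1 - x ^ 3))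

/-- The potential `q` of the equation `(p u')' = q u` satisfied by both sides of the cubic
transformation. -/
noncomputable def cubicPotential (x : ℝ) : ℝ := 2 * (1 - x) ^ 2 / (1 + 2 * x) ^ 4

lemma one_sub_cube_pos {x : ℝ} (hx : x ∈ Ico 0 1) : 0 < 1 - x ^ 3 :=
  sub_pos.2 (pow_lt_one₀ hx.1 hx.2 three_ne_zero)

lemma deriv_cubicArg_div_eq_cubicWeight {x : ℝ} (hx : x ∈ Ioo 0 1) :
    9 * (1 - x) ^ 2 / (1 + 2 * x) ^ 4 / (cubicArg x * (1 - cubicArg x)) = cubicWeight x := by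
  have hx0 : 0 < x := hx.1
  have h1x : 1 - x ≠ 0 := (sub_pos.2 hx.2).ne'
  have hden : 1 + 2 * x ≠ 0 := by positivity
  have hcube := (one_sub_cube_pos (Ioo_subset_Ico_self hx)).ne'
  have hcompl : 1 - cubicArg x = ((1 - x) / (1 + 2 * x)) ^ 3 := sub_sub_cancel _ _
  rw [hcompl, cubicArg_eq hden, cubicWeight]
  field_simp
  ring

lemma isSelfAdjointSolution_hypergeometric_cubicArg :
    IsSelfAdjointSolution cubicWeight cubicPotential
      (fun x ↦ ₂F₁ (1 / 3 : ℝ) (2 / 3 : ℝ) 1 (cubicArg x))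
      (fun x ↦ hypergeometricFlux (1 / 3) (2 / 3) (cubicArg x)) 0 1 := by
  have hden {x : ℝ} (_ : 0 ≤ x) : 1 + 2 * x ≠ 0 := by positivity
  refine (isSelfAdjointSolution_hypergeometric_comp (by norm_num)
    (fun x hx ↦ hasDerivAt_cubicArg (hden hx.1)) (fun x hx ↦ ?_) fun x hx ↦ ?_).congr
    (fun x hx ↦ deriv_cubicArg_div_eq_cubicWeight hx) fun x _ ↦ ?_
  · rw [abs_of_nonneg (cubicArg_mem_Ico hx).1]
    exact (cubicArg_mem_Ico hx).2
  · have := hx.1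
    rw [cubicArg_eq (hden hx.1.le)]
    positivity
  · simp only [cubicPotential]
    ring

lemma isSelfAdjointSolution_hypergeometric_cube :
    IsSelfAdjointSolution (fun x ↦ 3 / (x * (1 - x ^ 3))) (fun x ↦ 2 / 3 * x ^ 2)
      (fun x ↦ ₂F₁ (1 / 3 : ℝ) (2 / 3 : ℝ) 1 (x ^ 3))
      (fun x ↦ hypergeometricFlux (1 / 3) (2 / 3) (x ^ 3)) 0 1 := by
  refine (isSelfAdjointSolution_hypergeometric_comp (by norm_num)
    (fun x _ ↦ hasDerivAt_pow 3 x) (fun x hx ↦ ?_) fun x hx ↦ pow_ne_zero 3 hx.1.ne').congr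
    (fun x hx ↦ ?_) fun x _ ↦ ?_
  · rw [abs_of_nonneg (pow_nonneg hx.1 3)]
    exact sub_pos.1 (one_sub_cube_pos hx)
  · have hx0 : x ≠ 0 := hx.1.ne'
    simp only [Nat.cast_ofNat]
    field_simp
  · simp only [Nat.cast_ofNat, Nat.add_one_sub_one]
    ring

/-- The flux of `(1 + 2x) F (x³)` in the equation of the cubic transformation, rewritten so that it
makes sense at `x = 0`. -/
noncomputable def cubicFlux (x : ℝ) : ℝ :=
  (2 * (x * (1 - x ^ 3)) * ₂F₁ (1 / 3 : ℝ) (2 / 3 : ℝ) 1 (x ^ 3)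
    + 3 * (1 + 2 * x) * hypergeometricFlux (1 / 3) (2 / 3) (x ^ 3)) / (1 + 2 * x) ^ 2

lemma continuousOn_cubicFlux : ContinuousOn cubicFlux (Ico 0 1) := by
  have hw := isSelfAdjointSolution_hypergeometric_cube
  refine (((by fun_prop : Continuous _).continuousOn.mul hw.continuousOn).add
    ((by fun_prop : Continuous _).continuousOn.mul hw.continuousOn_flux)).div (by fun_prop)
    fun x hx ↦ ?_
  have := hx.1
  positivity

lemma hasDerivAt_cubicFlux {x : ℝ} (hx : x ∈ Ioo 0 1) :
    HasDerivAt cubicFlux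
      (cubicPotential x * ((1 + 2 * x) * ₂F₁ (1 / 3 : ℝ) (2 / 3 : ℝ) 1 (x ^ 3))) x := by
  have hx0 : 0 < x := hx.1
  have hden : 1 + 2 * x ≠ 0 := by positivity
  have hcube := (one_sub_cube_pos (Ioo_subset_Ico_self hx)).ne'
  have hp : HasDerivAt (fun x : ℝ ↦ 2 * (x * (1 - x ^ 3))) (2 - 8 * x ^ 3) x :=
    (((hasDerivAt_id x).mul ((hasDerivAt_pow 3 x).const_sub 1)).const_mul 2).congr_deriv
      (by simp only [one_mul, id_eq, Nat.cast_ofNat, Nat.add_one_sub_one, mul_neg]; ring)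
  have hw := isSelfAdjointSolution_hypergeometric_cube
  have hnum := (hp.mul (hw.hasDerivAt x hx)).add
    (((hasDerivAt_one_add_two_mul x).const_mul 3).mul (hw.hasDerivAt_flux x hx))
  refine (hnum.div ((hasDerivAt_one_add_two_mul x).pow 2) (pow_ne_zero 2 hden)).congr_deriv ?_
  simp only [cubicPotential, Pi.add_apply, Pi.mul_apply, Pi.pow_apply]
  field_simp
  ring

lemma isSelfAdjointSolution_one_add_two_mul_hypergeometric_cube :
    IsSelfAdjointSolution cubicWeight cubicPotential
      (fun x ↦ (1 + 2 * x) * ₂F₁ (1 / 3 : ℝ) (2 / 3 : ℝ) 1 (x ^ 3)) cubicFlux 0 1 where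
  continuousOn :=
    ContinuousOn.mul (by fun_prop) isSelfAdjointSolution_hypergeometric_cube.continuousOn
  continuousOn_flux := continuousOn_cubicFlux
  hasDerivAt x hx := by
    have hx0 : 0 < x := hx.1
    have hcube := (one_sub_cube_pos (Ioo_subset_Ico_self hx)).ne'
    refine ((hasDerivAt_one_add_two_mul x).mul
      (isSelfAdjointSolution_hypergeometric_cube.hasDerivAt x hx)).congr_deriv ?_
    rw [cubicWeight, cubicFlux]
    field_simp
  hasDerivAt_flux _ hx := hasDerivAt_cubicFlux hx

theorem ordinaryHypergeometric_cubic_transformation {x : ℝ} (hx : x ∈ Ico 0 1) :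
    ₂F₁ (1 / 3 : ℝ) (2 / 3 : ℝ) 1 (1 - ((1 - x) / (1 + 2 * x)) ^ 3) =
      (1 + 2 * x) * ₂F₁ (1 / 3 : ℝ) (2 / 3 : ℝ) 1 (x ^ 3) := by
  refine isSelfAdjointSolution_hypergeometric_cubicArg.eqOn
    isSelfAdjointSolution_one_add_two_mul_hypergeometric_cube
    ?_ ?_ ?_ (fun y hy ↦ ?_) hx
  · simp [cubicArg, hypergeometricFlux]
  · simp [cubicFlux, hypergeometricFlux]
  · simp [cubicArg]
  · have hF := ordinaryHypergeometric_pos (a := 1 / 3) (b := 2 / 3) (c := 1) (by norm_num)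
      (by norm_num) one_pos ⟨pow_nonneg hy.1 3, sub_pos.1 (one_sub_cube_pos hy)⟩
    have := hy.1
    positivity

end CubicTransformation

/-- Berndt–Chan √3 ratio. -/
theorem berndt_chan_sqrt3_ratio :
    hyp2F1 (1/3) (2/3) 1 (3 * Real.sqrt 3 / 4 * (Real.sqrt 3 - 1)) =
      Real.sqrt 3 * hyp2F1 (1/3) (2/3) 1 ((3 * Real.sqrt 3 - 5) / 4) := by
  have hsq : √3 ^ 2 = 3 := sq_sqrt (by norm_num)
  have hmem : (√3 - 1) / 2 ∈ Ico 0 1 := by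
    constructor <;> nlinarith [sqrt_nonneg 3]
  have hden : 1 + 2 * ((√3 - 1) / 2) = √3 := by ring
  have hfixed : (1 - (√3 - 1) / 2) / √3 = (√3 - 1) / 2 := by
    rw [div_eq_iff (by positivity)]
    linear_combination -hsq / 2
  have hcube : ((√3 - 1) / 2) ^ 3 = (3 * √3 - 5) / 4 := by
    linear_combination (√3 - 3) / 8 * hsq
  have harg : 1 - (3 * √3 - 5) / 4 = 3 * √3 / 4 * (√3 - 1) := by
    linear_combination -3 / 4 * hsq
  have key := ordinaryHypergeometric_cubic_transformation hmem
  rw [hden, hfixed, hcube, harg] at key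
  rw [hyp2F1_eq_ordinaryHypergeometric, hyp2F1_eq_ordinaryHypergeometric, key]
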